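/- For every integer N ≥ 3 there exists a nonnegative Borel function f_N ∈ L¹((0,1)²) with ∫ f_N dλ ≤ 1/N such that for every x ∈ (0,1)² there is an open axis-parallel rectangle B ⊂ (0,1)² containing x with diameter less than 1/N and (1/λ(B)) ∫_B f_N dλ > N. -/

import Mathlib

open MeasureTheory Set

/-!
A mass `c / b` at a corner of the unit square has average greater than `A < c` on every rectangle
that contains it, starts at that corner and has area at most `1 / b`. These rectangles fill the
region `x * y ≤ 1 / b`, whose area is about `log b / b`, larger than the mass by a factor of order
`log b`.

Subdivide the square into the `b ^ 2` cells of a grid and repeat the construction inside each cell.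
One round adds the mass `c / b` and multiplies the area of the exceptional set by about
`1 - log b / b`. After `K ≈ κ * b` rounds the total mass is at most `c * κ`, while the exceptional
set has area about `exp (-κ * log b)`, which tends to `0` as `b → ∞`. A last rescaling into a fine
grid makes all rectangles small without changing the mass, and the remaining exceptional set is
covered by an open set of small measure, on which a constant larger than `A` is added.
-/

section AffineChangeOfVariables

variable {E : Type*} [NormedAddCommGroup E] [NormedSpace ℝ E]

theorem diam_preimage_smul_sub_le {b : ℝ} (hb : b ≠ 0) (v : E) {s : Set E}
    (hs : Bornology.IsBounded s) :
    Metric.diam ((fun z => b • z - v) ⁻¹' s) ≤ Metric.diam s / |b| := by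
  refine Metric.diam_le_of_forall_dist_le (by positivity) fun x hx y hy => ?_
  rw [le_div_iff₀' (abs_pos.2 hb), ← Real.norm_eq_abs, ← dist_smul₀, ← dist_sub_right _ _ v]
  exact Metric.dist_le_diam_of_mem hs hx hy

variable [MeasurableSpace E] [BorelSpace E]

theorem measurableEmbedding_smul_sub {b : ℝ} (hb : b ≠ 0) (v : E) :
    MeasurableEmbedding fun z : E => b • z - v :=
  ((Homeomorph.smulOfNeZero b hb).trans (Homeomorph.subRight v)).measurableEmbedding

variable [FiniteDimensional ℝ E] (μ : Measure E) [μ.IsAddHaarMeasure] {b : ℝ}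

theorem map_smul_sub (hb : b ≠ 0) (v : E) :
    μ.map (fun z => b • z - v) = ENNReal.ofReal |(b ^ Module.finrank ℝ E)⁻¹| • μ := by
  have hcomp : (fun z => b • z - v) = (fun z => z - v) ∘ fun z => b • z := rfl
  rw [hcomp, ← Measure.map_map (measurable_sub_const v) (measurable_const_smul b),
    Measure.map_addHaar_smul μ hb, Measure.map_smul, map_sub_right_eq_self]

theorem measureReal_preimage_smul_sub (hb : b ≠ 0) (v : E) (s : Set E) :
    μ.real ((fun z => b • z - v) ⁻¹' s) = |(b ^ Module.finrank ℝ E)⁻¹| * μ.real s := by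
  rw [measureReal_def, ← (measurableEmbedding_smul_sub hb v).map_apply, map_smul_sub μ hb,
    ← measureReal_def, measureReal_ennreal_smul_apply, ENNReal.toReal_ofReal (abs_nonneg _)]

theorem setIntegral_preimage_smul_sub {F : Type*} [NormedAddCommGroup F] [NormedSpace ℝ F]
    (hb : b ≠ 0) (v : E) (f : E → F) (s : Set E) :
    ∫ z in (fun z => b • z - v) ⁻¹' s, f (b • z - v) ∂μ =
      |(b ^ Module.finrank ℝ E)⁻¹| • ∫ z in s, f z ∂μ := by
  rw [← (measurableEmbedding_smul_sub hb v).setIntegral_map, map_smul_sub μ hb,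
    Measure.restrict_smul, integral_smul_measure, ENNReal.toReal_ofReal (abs_nonneg _)]

end AffineChangeOfVariables

theorem mul_measureReal_lt_setIntegral {X : Type*} [MeasurableSpace X] {μ : Measure X} {A c : ℝ}
    {f : X → ℝ} {s : Set X} (hAc : A < c) (hf : IntegrableOn f s μ) (hs : MeasurableSet s)
    (hs₀ : μ s ≠ 0) (hs_top : μ s ≠ ⊤) (hcf : ∀ x ∈ s, c ≤ f x) :
    A * μ.real s < ∫ x in s, f x ∂μ :=
  calc A * μ.real s < c * μ.real s := by
        have := ENNReal.toReal_pos hs₀ hs_top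
        rw [measureReal_def]
        gcongr
    _ ≤ ∫ x in s, f x ∂μ := setIntegral_ge_of_const_le_real hs hs_top hcf hf

theorem volume_real_Ioo_prod_Ioo {a b c d : ℝ} (hab : a ≤ b) (hcd : c ≤ d) :
    volume.real (Ioo a b ×ˢ Ioo c d) = (b - a) * (d - c) := by
  rw [Measure.volume_eq_prod, measureReal_prod_prod, Real.volume_real_Ioo_of_le hab,
    Real.volume_real_Ioo_of_le hcd]

section LargeAverages

/-- The open unit square `(0,1)²`. -/
abbrev unitSquare : Set (ℝ × ℝ) := Ioo (0 : ℝ) 1 ×ˢ Ioo (0 : ℝ) 1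

/-- Some open rectangle of diameter less than `r` inside the open unit square contains `z`, and the
average of `f` over it exceeds `A`. The inequality between averages is multiplied by the area, and
the diameter is taken in the maximum metric of `ℝ × ℝ`. -/
def LargeAverageAt (A r : ℝ) (f : ℝ × ℝ → ℝ) (z : ℝ × ℝ) : Prop :=
  ∃ a b c d : ℝ, z ∈ Ioo a b ×ˢ Ioo c d ∧ Ioo a b ×ˢ Ioo c d ⊆ unitSquare ∧
    Metric.diam (Ioo a b ×ˢ Ioo c d) < r ∧
    A * volume.real (Ioo a b ×ˢ Ioo c d) < ∫ y in Ioo a b ×ˢ Ioo c d, f y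

/-- The points of the open unit square at which `LargeAverageAt A r f` fails. The construction
shrinks the measure of this set step by step; it need not be known to be measurable. -/
def exceptionalSet (A r : ℝ) (f : ℝ × ℝ → ℝ) : Set (ℝ × ℝ) :=
  {z ∈ unitSquare | ¬ LargeAverageAt A r f z}

theorem isBounded_unitSquare : Bornology.IsBounded unitSquare :=
  (Metric.isBounded_Ioo _ _).prod (Metric.isBounded_Ioo _ _)

theorem diam_unitSquare_le : Metric.diam unitSquare ≤ 1 := by
  refine Metric.diam_le_of_forall_dist_le zero_le_one fun x hx y hy => max_le ?_ ?_
  · simpa using Real.dist_le_of_mem_Icc (Ioo_subset_Icc_self hx.1) (Ioo_subset_Icc_self hy.1)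
  · simpa using Real.dist_le_of_mem_Icc (Ioo_subset_Icc_self hx.2) (Ioo_subset_Icc_self hy.2)

theorem exceptionalSet_subset_unitSquare (A r : ℝ) (f : ℝ × ℝ → ℝ) :
    exceptionalSet A r f ⊆ unitSquare :=
  sep_subset _ _

theorem volume_exceptionalSet_ne_top (A r : ℝ) (f : ℝ × ℝ → ℝ) :
    volume (exceptionalSet A r f) ≠ ⊤ :=
  measure_ne_top_of_subset (exceptionalSet_subset_unitSquare A r f)
    isBounded_unitSquare.measure_lt_top.ne

variable {A r : ℝ} {f g : ℝ × ℝ → ℝ} {z : ℝ × ℝ}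

theorem LargeAverageAt.mono {r' : ℝ} (h : LargeAverageAt A r f z) (hr : r ≤ r')
    (hf : Integrable f) (hg : Integrable g) (hfg : f ≤ g) : LargeAverageAt A r' g z := by
  obtain ⟨a, b, c, d, hz, hsub, hdiam, hlt⟩ := h
  exact ⟨a, b, c, d, hz, hsub, hdiam.trans_le hr,
    hlt.trans_le (integral_mono hf.integrableOn hg.integrableOn hfg)⟩

theorem largeAverageAt_of_isOpen {c : ℝ} {V : Set (ℝ × ℝ)} (hAc : A < c) (hr : 0 < r)
    (hf : Integrable f) (hV : IsOpen V) (hcf : ∀ x ∈ V, c ≤ f x) (hzV : z ∈ V)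
    (hz : z ∈ unitSquare) : LargeAverageAt A r f z := by
  obtain ⟨ε, hε, hball⟩ := Metric.isOpen_iff.1 (hV.inter (isOpen_Ioo.prod isOpen_Ioo)) z ⟨hzV, hz⟩
  obtain ⟨s, hs, hsε, hsr⟩ : ∃ s, 0 < s ∧ s ≤ ε ∧ 2 * s < r :=
    ⟨min ε (r / 3), by positivity, min_le_left _ _, by linarith [min_le_right ε (r / 3)]⟩
  have hsub := (Metric.ball_subset_ball hsε).trans hball
  have hbox : Metric.ball z s = Ioo (z.1 - s) (z.1 + s) ×ˢ Ioo (z.2 - s) (z.2 + s) := by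
    rw [← ball_prod_same, Real.ball_eq_Ioo, Real.ball_eq_Ioo]
  refine ⟨z.1 - s, z.1 + s, z.2 - s, z.2 + s, ?_⟩
  rw [← hbox]
  exact ⟨Metric.mem_ball_self hs, hsub.trans inter_subset_right,
    (Metric.diam_ball hs.le).trans_lt hsr,
    mul_measureReal_lt_setIntegral hAc hf.integrableOn measurableSet_ball
      (Metric.measure_ball_pos volume z hs).ne' measure_ball_lt_top.ne
      fun x hx => hcf x (hsub hx).1⟩

end LargeAverages

section Grid

/-- The affine map taking the cell `(p₁/b, (p₁+1)/b) × (p₂/b, (p₂+1)/b)` of the grid of mesh `1/b`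
onto the open unit square. -/
def gridMap (b : ℕ) (p : ℕ × ℕ) (z : ℝ × ℝ) : ℝ × ℝ :=
  (b : ℝ) • z - ((p.1 : ℝ), (p.2 : ℝ))

/-- The cells of the grid of mesh `1/b` in the unit square, each indexed by `b` times its lower left
corner. -/
def gridCells (b : ℕ) : Finset (ℕ × ℕ) :=
  Finset.range b ×ˢ Finset.range b

variable {b : ℕ} {p : ℕ × ℕ}

theorem mem_gridCells : p ∈ gridCells b ↔ p.1 < b ∧ p.2 < b := by
  simp [gridCells]

theorem card_gridCells (b : ℕ) : (gridCells b).card = b ^ 2 := by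
  simp [gridCells, sq]

theorem measurable_gridMap : Measurable (gridMap b p) := by
  unfold gridMap
  fun_prop

theorem gridMap_preimage_Ioo_prod_Ioo (hb : b ≠ 0) (x₁ x₂ y₁ y₂ : ℝ) :
    gridMap b p ⁻¹' (Ioo x₁ x₂ ×ˢ Ioo y₁ y₂) =
      Ioo ((x₁ + p.1) / b) ((x₂ + p.1) / b) ×ˢ Ioo ((y₁ + p.2) / b) ((y₂ + p.2) / b) := by
  have hb' : (0 : ℝ) < b := by positivity
  ext z
  simp only [gridMap, mem_preimage, mem_prod, mem_Ioo, Prod.fst_sub, Prod.snd_sub, Prod.smul_fst,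
    Prod.smul_snd, smul_eq_mul, div_lt_iff₀' hb', lt_div_iff₀' hb', lt_sub_iff_add_lt,
    sub_lt_iff_lt_add]

theorem gridMap_preimage_unitSquare (hb : b ≠ 0) :
    gridMap b p ⁻¹' unitSquare =
      Ioo ((p.1 : ℝ) / b) ((p.1 + 1) / b) ×ˢ Ioo ((p.2 : ℝ) / b) ((p.2 + 1) / b) := by
  simp only [unitSquare, gridMap_preimage_Ioo_prod_Ioo hb, zero_add, add_comm (1 : ℝ)]

theorem gridMap_preimage_unitSquare_subset (hp : p ∈ gridCells b) :
    gridMap b p ⁻¹' unitSquare ⊆ unitSquare := by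
  obtain ⟨hp₁, hp₂⟩ := mem_gridCells.1 hp
  have hb : b ≠ 0 := by omega
  have hb' : (0 : ℝ) < b := by positivity
  rw [gridMap_preimage_unitSquare hb]
  refine prod_mono (Ioo_subset_Ioo (by positivity) ?_) (Ioo_subset_Ioo (by positivity) ?_) <;>
  · rw [div_le_one hb']
    exact_mod_cast Nat.succ_le_of_lt ‹_›

theorem integrable_comp_gridMap {f : ℝ × ℝ → ℝ} (hb : b ≠ 0) (hf : Integrable f) :
    Integrable fun z => f (gridMap b p z) :=
  (hf.comp_sub_right _).comp_smul (Nat.cast_ne_zero.2 hb)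

theorem volume_real_gridMap_preimage (hb : b ≠ 0) (s : Set (ℝ × ℝ)) :
    volume.real (gridMap b p ⁻¹' s) = volume.real s / (b : ℝ) ^ 2 := by
  refine (measureReal_preimage_smul_sub volume (Nat.cast_ne_zero.2 hb) _ s).trans ?_
  simp [abs_of_nonneg, inv_mul_eq_div]

theorem setIntegral_gridMap_preimage (hb : b ≠ 0) (f : ℝ × ℝ → ℝ) (s : Set (ℝ × ℝ)) :
    ∫ z in gridMap b p ⁻¹' s, f (gridMap b p z) = (∫ z in s, f z) / (b : ℝ) ^ 2 := by
  refine (setIntegral_preimage_smul_sub volume (Nat.cast_ne_zero.2 hb) _ f s).trans ?_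
  simp [abs_of_nonneg, inv_mul_eq_div]

theorem LargeAverageAt.comp_gridMap {A r : ℝ} {f : ℝ × ℝ → ℝ} {z : ℝ × ℝ} (hp : p ∈ gridCells b)
    (h : LargeAverageAt A r f (gridMap b p z)) :
    LargeAverageAt A (r / b) (fun z => f (gridMap b p z)) z := by
  obtain ⟨x₁, x₂, y₁, y₂, hz, hsub, hdiam, hlt⟩ := h
  have hb : b ≠ 0 := by have := (mem_gridCells.1 hp).1; omega
  refine ⟨_, _, _, _, (gridMap_preimage_Ioo_prod_Ioo hb x₁ x₂ y₁ y₂).subset hz, ?_⟩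
  rw [← gridMap_preimage_Ioo_prod_Ioo hb, volume_real_gridMap_preimage hb,
    setIntegral_gridMap_preimage hb, ← mul_div_assoc]
  refine ⟨(preimage_mono hsub).trans (gridMap_preimage_unitSquare_subset hp), ?_, by gcongr⟩
  calc Metric.diam (gridMap b p ⁻¹' (Ioo x₁ x₂ ×ˢ Ioo y₁ y₂))
      ≤ Metric.diam (Ioo x₁ x₂ ×ˢ Ioo y₁ y₂) / |(b : ℝ)| :=
        diam_preimage_smul_sub_le (Nat.cast_ne_zero.2 hb) _ (isBounded_unitSquare.subset hsub)
    _ < r / b := by rw [Nat.abs_cast]; gcongr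

theorem ae_mul_ne_natCast {c : ℝ} (hc : c ≠ 0) : ∀ᵐ x : ℝ, ∀ n : ℕ, c * x ≠ n := by
  filter_upwards [((countable_range ((↑) : ℕ → ℝ)).preimage
    (mul_right_injective₀ hc)).ae_notMem volume] with x hx n hn
  exact hx ⟨n, hn.symm⟩

theorem exists_mul_sub_mem_Ioo {x : ℝ} (hx : x ∈ Ioo (0 : ℝ) 1) (hb : b ≠ 0)
    (hxb : ∀ n : ℕ, (b : ℝ) * x ≠ n) : ∃ i < b, (b : ℝ) * x - i ∈ Ioo (0 : ℝ) 1 := by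
  have hb' : (0 : ℝ) < b := by positivity
  have hx₀ : 0 ≤ (b : ℝ) * x := mul_nonneg hb'.le hx.1.le
  refine ⟨⌊(b : ℝ) * x⌋₊, (Nat.floor_lt hx₀).2 (mul_lt_of_lt_one_right hb' hx.2),
    sub_pos.2 ((Nat.floor_le hx₀).lt_of_ne (hxb _).symm), ?_⟩
  linarith [Nat.lt_floor_add_one ((b : ℝ) * x)]

theorem ae_exists_gridMap_mem_unitSquare (hb : b ≠ 0) :
    ∀ᵐ z : ℝ × ℝ, z ∈ unitSquare → ∃ p ∈ gridCells b, gridMap b p z ∈ unitSquare := by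
  have hae := ae_mul_ne_natCast (Nat.cast_ne_zero.2 hb)
  filter_upwards [Measure.quasiMeasurePreserving_fst.ae hae,
    Measure.quasiMeasurePreserving_snd.ae hae] with z hz₁ hz₂ hz
  obtain ⟨i, hi, hi'⟩ := exists_mul_sub_mem_Ioo hz.1 hb hz₁
  obtain ⟨j, hj, hj'⟩ := exists_mul_sub_mem_Ioo hz.2 hb hz₂
  exact ⟨(i, j), mem_gridCells.2 ⟨hi, hj⟩, hi', hj'⟩

end Grid

section Tiling

/-- The sum of the rescaled copies of `f`, usually supported in the unit square, on the `b ^ 2`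
cells of the grid of mesh `1/b`. The copies are not renormalised in height, so the total mass is
that of `f`. -/
def tiling (b : ℕ) (f : ℝ × ℝ → ℝ) (z : ℝ × ℝ) : ℝ :=
  ∑ p ∈ gridCells b, f (gridMap b p z)

variable {b : ℕ} {f : ℝ × ℝ → ℝ}

theorem measurable_tiling (hf : Measurable f) : Measurable (tiling b f) :=
  Finset.measurable_fun_sum _ fun _ _ => hf.comp measurable_gridMap

theorem tiling_nonneg (hf : 0 ≤ f) : 0 ≤ tiling b f :=
  fun _ => Finset.sum_nonneg fun _ _ => hf _

theorem integrable_tiling (hb : b ≠ 0) (hf : Integrable f) : Integrable (tiling b f) :=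
  integrable_finsetSum _ fun _ _ => integrable_comp_gridMap hb hf

theorem integral_tiling (hb : b ≠ 0) (hf : Integrable f) : ∫ z, tiling b f z = ∫ z, f z := by
  have hcell (p : ℕ × ℕ) : ∫ z, f (gridMap b p z) = (∫ z, f z) / (b : ℝ) ^ 2 := by
    simpa using setIntegral_gridMap_preimage (p := p) hb f univ
  simp only [tiling, integral_finsetSum _ fun _ _ => integrable_comp_gridMap hb hf, hcell,
    Finset.sum_const, card_gridCells, nsmul_eq_mul, Nat.cast_pow]
  field_simp

theorem comp_gridMap_le_tiling {p : ℕ × ℕ} (hf : 0 ≤ f) (hp : p ∈ gridCells b) :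
    (fun z => f (gridMap b p z)) ≤ tiling b f :=
  fun z => Finset.single_le_sum (f := fun p => f (gridMap b p z)) (fun _ _ => hf _) hp

theorem exceptionalSet_ae_le_biUnion {A r r' : ℝ} {F : ℝ × ℝ → ℝ} {G : Finset (ℕ × ℕ)}
    (hb : b ≠ 0) (hr : r / b ≤ r') (hf : Integrable f) (hf₀ : 0 ≤ f) (hF : Integrable F)
    (hfF : tiling b f ≤ F)
    (hG : ∀ p ∈ G, ∀ z, gridMap b p z ∈ unitSquare → LargeAverageAt A r' F z) :
    exceptionalSet A r' F ≤ᵐ[volume]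
      (⋃ p ∈ gridCells b \ G, gridMap b p ⁻¹' exceptionalSet A r f : Set (ℝ × ℝ)) := by
  filter_upwards [ae_exists_gridMap_mem_unitSquare hb] with z hcell hz
  obtain ⟨p, hp, hpz⟩ := hcell hz.1
  have hpG : p ∉ G := fun hpG => hz.2 (hG p hpG z hpz)
  have hpz' : ¬ LargeAverageAt A r f (gridMap b p z) := fun h =>
    hz.2 ((h.comp_gridMap hp).mono hr (integrable_comp_gridMap hb hf) hF
      ((comp_gridMap_le_tiling hf₀ hp).trans hfF))
  exact mem_biUnion (Finset.mem_sdiff.2 ⟨hp, hpG⟩) ⟨hpz, hpz'⟩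

theorem volume_real_exceptionalSet_le {A r r' : ℝ} {F : ℝ × ℝ → ℝ} {G : Finset (ℕ × ℕ)}
    (hb : b ≠ 0) (hr : r / b ≤ r') (hf : Integrable f) (hf₀ : 0 ≤ f) (hF : Integrable F)
    (hfF : tiling b f ≤ F) (hG_sub : G ⊆ gridCells b)
    (hG : ∀ p ∈ G, ∀ z, gridMap b p z ∈ unitSquare → LargeAverageAt A r' F z) :
    volume.real (exceptionalSet A r' F) ≤
      (1 - G.card / (b : ℝ) ^ 2) * volume.real (exceptionalSet A r f) := by
  have hb' : (b : ℝ) ≠ 0 := by positivity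
  have h_top : volume (⋃ p ∈ gridCells b \ G, gridMap b p ⁻¹' exceptionalSet A r f) ≠ ⊤ := by
    refine measure_ne_top_of_subset (iUnion₂_subset fun p hp => ?_)
      isBounded_unitSquare.measure_lt_top.ne
    exact (preimage_mono (exceptionalSet_subset_unitSquare A r f)).trans
      (gridMap_preimage_unitSquare_subset (Finset.mem_sdiff.1 hp).1)
  calc volume.real (exceptionalSet A r' F)
      ≤ volume.real (⋃ p ∈ gridCells b \ G, gridMap b p ⁻¹' exceptionalSet A r f) :=
        ENNReal.toReal_mono h_top
          (measure_mono_ae (exceptionalSet_ae_le_biUnion hb hr hf hf₀ hF hfF hG))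
    _ ≤ ∑ p ∈ gridCells b \ G, volume.real (gridMap b p ⁻¹' exceptionalSet A r f) :=
        measureReal_biUnion_finset_le _ _
    _ = (1 - G.card / (b : ℝ) ^ 2) * volume.real (exceptionalSet A r f) := by
        simp only [volume_real_gridMap_preimage hb, Finset.sum_const, nsmul_eq_mul,
          Finset.cast_card_sdiff hG_sub, card_gridCells, Nat.cast_pow]
        field_simp

theorem volume_real_exceptionalSet_tiling_le {A r : ℝ} (hb : b ≠ 0) (hf : Integrable f)
    (hf₀ : 0 ≤ f) :
    volume.real (exceptionalSet A (r / b) (tiling b f)) ≤ volume.real (exceptionalSet A r f) := by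
  simpa using volume_real_exceptionalSet_le (A := A) (G := ∅) hb le_rfl hf hf₀
    (integrable_tiling hb hf) le_rfl (Finset.empty_subset _) (by simp)

end Tiling

section CornerMass

/-- A mass `c / b` spread evenly over the cell of the grid of mesh `1/b` at the origin. -/
noncomputable def cornerMass (c : ℝ) (b : ℕ) : ℝ × ℝ → ℝ :=
  (Ioo (0 : ℝ) (1 / b) ×ˢ Ioo (0 : ℝ) (1 / b)).indicator fun _ => c * b

/-- The cells of the grid of mesh `1/b` whose upper right corner `(x, y)` satisfies `x * y ≤ 1/b`:
the discrete region under the hyperbola. -/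
def hyperbolaCells (b : ℕ) : Finset (ℕ × ℕ) :=
  {p ∈ gridCells b | (p.2 + 1) * (p.1 + 1) ≤ b}

variable {c : ℝ} {b : ℕ}

theorem measurable_cornerMass : Measurable (cornerMass c b) :=
  measurable_const.indicator (measurableSet_Ioo.prod measurableSet_Ioo)

theorem cornerMass_nonneg (hc : 0 ≤ c) : 0 ≤ cornerMass c b :=
  indicator_nonneg fun _ _ => by positivity

theorem integrable_cornerMass : Integrable (cornerMass c b) :=
  (integrable_indicator_iff (measurableSet_Ioo.prod measurableSet_Ioo)).2 <| integrableOn_const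
    ((Metric.isBounded_Ioo _ _).prod (Metric.isBounded_Ioo _ _)).measure_lt_top.ne

theorem integral_cornerMass (hb : b ≠ 0) : ∫ z, cornerMass c b z = c / b := by
  rw [cornerMass, integral_indicator (measurableSet_Ioo.prod measurableSet_Ioo), setIntegral_const,
    volume_real_Ioo_prod_Ioo (by positivity) (by positivity), smul_eq_mul]
  field_simp
  ring

theorem setIntegral_cornerMass {s : Set (ℝ × ℝ)} (hb : b ≠ 0)
    (hs : Ioo (0 : ℝ) (1 / b) ×ˢ Ioo (0 : ℝ) (1 / b) ⊆ s) : ∫ z in s, cornerMass c b z = c / b := by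
  rw [← integral_cornerMass hb]
  exact setIntegral_eq_integral_of_forall_compl_eq_zero fun _ hz =>
    indicator_of_notMem (fun hz' => hz (hs hz')) _

theorem mul_volume_real_lt_setIntegral_cornerMass {A x y : ℝ} (hAc : |A| < c) (hb : b ≠ 0)
    (hx : 1 / b ≤ x) (hy : 1 / b ≤ y) (hxy : x * y ≤ 1 / b) :
    A * volume.real (Ioo 0 x ×ˢ Ioo 0 y) < ∫ z in Ioo 0 x ×ˢ Ioo 0 y, cornerMass c b z := by
  have hb' : (0 : ℝ) < 1 / b := by positivity
  rw [setIntegral_cornerMass hb (prod_mono (Ioo_subset_Ioo_right hx) (Ioo_subset_Ioo_right hy)),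
    volume_real_Ioo_prod_Ioo (hb'.le.trans hx) (hb'.le.trans hy), sub_zero, sub_zero]
  calc A * (x * y) ≤ |A| * (1 / b) := by
        have : 0 ≤ x * y := mul_nonneg (hb'.le.trans hx) (hb'.le.trans hy)
        gcongr
        exact le_abs_self A
    _ < c * (1 / b) := by gcongr
    _ = c / b := mul_one_div c _

theorem largeAverageAt_cornerMass {A r : ℝ} {p : ℕ × ℕ} {z : ℝ × ℝ} (hAc : |A| < c) (hr : 1 < r)
    (hp : p ∈ hyperbolaCells b) (hz : gridMap b p z ∈ unitSquare) :
    LargeAverageAt A r (cornerMass c b) z := by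
  obtain ⟨hp_grid, hp_hyp⟩ := Finset.mem_filter.1 hp
  obtain ⟨hp₁, hp₂⟩ := mem_gridCells.1 hp_grid
  have hb : b ≠ 0 := by omega
  have hb' : (0 : ℝ) < b := by positivity
  have hp_hyp' : ((p.2 : ℝ) + 1) * (p.1 + 1) ≤ b := by exact_mod_cast hp_hyp
  have hx_le : ((p.1 : ℝ) + 1) / b ≤ 1 := (div_le_one hb').2 (by exact_mod_cast hp₁)
  have hy_le : ((p.2 : ℝ) + 1) / b ≤ 1 := (div_le_one hb').2 (by exact_mod_cast hp₂)
  have hsub : Ioo (0 : ℝ) ((p.1 + 1) / b) ×ˢ Ioo (0 : ℝ) ((p.2 + 1) / b) ⊆ unitSquare :=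
    prod_mono (Ioo_subset_Ioo_right hx_le) (Ioo_subset_Ioo_right hy_le)
  refine ⟨0, (p.1 + 1) / b, 0, (p.2 + 1) / b, ?_, hsub, ?_, ?_⟩
  · exact prod_mono (Ioo_subset_Ioo_left (by positivity)) (Ioo_subset_Ioo_left (by positivity))
      ((gridMap_preimage_unitSquare hb).subset hz)
  · exact ((Metric.diam_mono hsub isBounded_unitSquare).trans diam_unitSquare_le).trans_lt hr
  · refine mul_volume_real_lt_setIntegral_cornerMass hAc hb ?_ ?_ ?_
    · gcongr; simp
    · gcongr; simp
    · rw [div_mul_div_comm, div_le_div_iff₀ (by positivity) hb', one_mul]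
      gcongr
      linarith

theorem card_hyperbolaCells (b : ℕ) :
    (hyperbolaCells b).card = ∑ i ∈ Finset.range b, b / (i + 1) := by
  have hfiber (i : ℕ) :
      {j ∈ Finset.range b | (j + 1) * (i + 1) ≤ b} = Finset.range (b / (i + 1)) := by
    ext j
    simp only [Finset.mem_filter, Finset.mem_range, ← Nat.le_div_iff_mul_le i.succ_pos,
      Nat.succ_le_iff, and_iff_right_iff_imp]
    exact fun hj => hj.trans_le (Nat.div_le_self _ _)
  simp only [hyperbolaCells, gridCells, Finset.card_filter, Finset.sum_product]
  simp only [← Finset.card_filter, hfiber, Finset.card_range]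

theorem mul_log_sub_one_le_card_hyperbolaCells (hb : b ≠ 0) :
    b * (Real.log b - 1) ≤ (hyperbolaCells b).card := by
  have hharmonic : Real.log b ≤ ∑ i ∈ Finset.range b, ((i : ℝ) + 1)⁻¹ := by
    calc Real.log b ≤ Real.log (b + 1 : ℕ) := by gcongr; simp
      _ ≤ harmonic b := log_add_one_le_harmonic b
      _ = ∑ i ∈ Finset.range b, ((i : ℝ) + 1)⁻¹ := by simp [harmonic]
  have hdiv (i : ℕ) : (b : ℝ) * ((i : ℝ) + 1)⁻¹ - 1 ≤ (b / (i + 1) : ℕ) := by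
    rw [← div_eq_mul_inv, ← Nat.cast_succ, ← Nat.floor_div_eq_div (K := ℝ)]
    exact (Nat.sub_one_lt_floor _).le
  calc (b : ℝ) * (Real.log b - 1)
      ≤ b * ∑ i ∈ Finset.range b, ((i : ℝ) + 1)⁻¹ - b := by rw [mul_sub, mul_one]; gcongr
    _ = ∑ i ∈ Finset.range b, ((b : ℝ) * ((i : ℝ) + 1)⁻¹ - 1) := by
        simp [Finset.sum_sub_distrib, Finset.mul_sum]
    _ ≤ ∑ i ∈ Finset.range b, ((b / (i + 1) : ℕ) : ℝ) := Finset.sum_le_sum fun i _ => hdiv i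
    _ = (hyperbolaCells b).card := by rw [card_hyperbolaCells, Nat.cast_sum]

theorem one_sub_card_hyperbolaCells_div_le_exp (hb : b ≠ 0) :
    1 - (hyperbolaCells b).card / (b : ℝ) ^ 2 ≤ Real.exp (-((Real.log b - 1) / b)) := by
  have hcard : (Real.log b - 1) / b ≤ (hyperbolaCells b).card / (b : ℝ) ^ 2 := by
    rw [← mul_div_mul_left _ _ (Nat.cast_ne_zero.2 hb : (b : ℝ) ≠ 0), ← sq]
    gcongr
    exact mul_log_sub_one_le_card_hyperbolaCells hb
  exact (sub_le_sub_left hcard 1).trans (Real.one_sub_le_exp_neg _)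

end CornerMass

section IteratedCornerMass

/-- The sum of `cornerMass c b` and its copies on the cells of the grids of mesh
`1/b, 1/b², …, 1/b^(K-1)`. -/
noncomputable def iteratedCornerMass (c : ℝ) (b : ℕ) : ℕ → ℝ × ℝ → ℝ
  | 0 => 0
  | K + 1 => cornerMass c b + tiling b (iteratedCornerMass c b K)

variable {c : ℝ} {b : ℕ}

theorem measurable_iteratedCornerMass (K : ℕ) : Measurable (iteratedCornerMass c b K) := by
  induction K with
  | zero => exact measurable_const
  | succ K ih => exact measurable_cornerMass.add (measurable_tiling ih)

theorem iteratedCornerMass_nonneg (hc : 0 ≤ c) (K : ℕ) : 0 ≤ iteratedCornerMass c b K := by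
  induction K with
  | zero => exact le_rfl
  | succ K ih => exact add_nonneg (cornerMass_nonneg hc) (tiling_nonneg ih)

theorem integrable_iteratedCornerMass (hb : b ≠ 0) (K : ℕ) :
    Integrable (iteratedCornerMass c b K) := by
  induction K with
  | zero => exact integrable_zero _ _ _
  | succ K ih => exact integrable_cornerMass.add (integrable_tiling hb ih)

theorem integral_iteratedCornerMass (hb : b ≠ 0) (K : ℕ) :
    ∫ z, iteratedCornerMass c b K z = K * (c / b) := by
  induction K with
  | zero => simp [iteratedCornerMass]
  | succ K ih =>
    have hint := integrable_iteratedCornerMass (c := c) hb K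
    simp only [iteratedCornerMass, Pi.add_apply]
    rw [integral_add integrable_cornerMass (integrable_tiling hb hint), integral_cornerMass hb,
      integral_tiling hb hint, ih]
    push_cast
    ring

theorem volume_real_exceptionalSet_iteratedCornerMass_le {A r : ℝ} (hAc : |A| < c) (hr : 1 < r)
    (hb : b ≠ 0) (K : ℕ) :
    volume.real (exceptionalSet A r (iteratedCornerMass c b K)) ≤
      Real.exp (-((Real.log b - 1) / b)) ^ K := by
  have hc : 0 ≤ c := (abs_nonneg A).trans hAc.le
  induction K with
  | zero =>
    calc volume.real (exceptionalSet A r (iteratedCornerMass c b 0))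
        ≤ volume.real unitSquare := measureReal_mono (exceptionalSet_subset_unitSquare A r _)
          isBounded_unitSquare.measure_lt_top.ne
      _ = Real.exp (-((Real.log b - 1) / b)) ^ 0 := by
        rw [volume_real_Ioo_prod_Ioo zero_le_one zero_le_one]; simp
  | succ K ih =>
    have hint := integrable_iteratedCornerMass (c := c) hb
    have hnonneg := iteratedCornerMass_nonneg (b := b) hc K
    have hcorner : cornerMass c b ≤ iteratedCornerMass c b (K + 1) :=
      le_add_of_nonneg_right (tiling_nonneg hnonneg)
    have hstep := volume_real_exceptionalSet_le (A := A) hb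
      (div_le_self (by positivity) (Nat.one_le_cast.2 (Nat.one_le_iff_ne_zero.2 hb))) (hint K)
      hnonneg (hint (K + 1)) (le_add_of_nonneg_left (cornerMass_nonneg hc))
      (Finset.filter_subset _ _) fun p hp z hz =>
        (largeAverageAt_cornerMass hAc hr hp hz).mono le_rfl integrable_cornerMass (hint (K + 1))
          hcorner
    rw [pow_succ']
    refine hstep.trans ?_
    gcongr
    exact one_sub_card_hyperbolaCells_div_le_exp hb

open Filter Topology in
theorem tendsto_exp_neg_log_sub_one_div_pow_floor {κ : ℝ} (hκ : 0 < κ) :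
    Tendsto (fun b : ℕ => Real.exp (-((Real.log b - 1) / b)) ^ ⌊κ * b⌋₊) atTop (𝓝 0) := by
  have hfloor : Tendsto (fun b : ℕ => (⌊κ * b⌋₊ : ℝ) / b) atTop (𝓝 κ) :=
    (tendsto_nat_floor_mul_div_atTop hκ.le).comp tendsto_natCast_atTop_atTop
  have hlog : Tendsto (fun b : ℕ => Real.log b - 1) atTop atTop :=
    tendsto_atTop_add_const_right _ _ (Real.tendsto_log_atTop.comp tendsto_natCast_atTop_atTop)
  refine (Real.tendsto_exp_neg_atTop_nhds_zero.comp (hfloor.pos_mul_atTop hκ hlog)).congr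
    fun b => ?_
  rw [Function.comp_apply, ← Real.exp_nat_mul]
  ring_nf

end IteratedCornerMass

theorem exists_integral_le_volume_real_exceptionalSet_lt (A : ℝ) {r δ ε : ℝ} (hr : 0 < r)
    (hδ : 0 < δ) (hε : 0 < ε) :
    ∃ f : ℝ × ℝ → ℝ, Measurable f ∧ 0 ≤ f ∧ Integrable f ∧ ∫ z, f z ≤ δ ∧
      volume.real (exceptionalSet A r f) < ε := by
  obtain ⟨c, hAc⟩ := exists_gt |A|
  have hc : 0 < c := (abs_nonneg A).trans_lt hAc
  obtain ⟨b, hbε, hb⟩ := (((tendsto_exp_neg_log_sub_one_div_pow_floor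
    (div_pos hδ hc)).eventually_lt_const hε).and (Filter.eventually_ne_atTop 0)).exists
  obtain ⟨n, hn⟩ := exists_nat_gt (1 / r)
  have hn₀ : 0 < (n : ℝ) := (one_div_pos.2 hr).trans hn
  have hn' : n ≠ 0 := Nat.cast_ne_zero.1 hn₀.ne'
  set K := ⌊δ / c * b⌋₊
  have hK : (K : ℝ) ≤ δ / c * b := Nat.floor_le (by positivity)
  have hf := integrable_iteratedCornerMass (c := c) hb K
  have hf₀ := iteratedCornerMass_nonneg (b := b) hc.le K
  refine ⟨tiling n (iteratedCornerMass c b K), measurable_tiling (measurable_iteratedCornerMass K),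
    tiling_nonneg hf₀, integrable_tiling hn' hf, ?_, ?_⟩
  · calc ∫ z, tiling n (iteratedCornerMass c b K) z = K * (c / b) := by
          rw [integral_tiling hn' hf, integral_iteratedCornerMass hb]
      _ ≤ δ / c * b * (c / b) := by gcongr
      _ = δ := by field_simp
  · have hnr : 1 < r * n := (div_lt_iff₀' hr).1 hn
    calc volume.real (exceptionalSet A r (tiling n (iteratedCornerMass c b K)))
        = volume.real (exceptionalSet A (r * n / n) (tiling n (iteratedCornerMass c b K))) := by
          rw [mul_div_cancel_right₀ r hn₀.ne']
      _ ≤ volume.real (exceptionalSet A (r * n) (iteratedCornerMass c b K)) :=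
          volume_real_exceptionalSet_tiling_le hn' hf hf₀
      _ ≤ Real.exp (-((Real.log b - 1) / b)) ^ K :=
          volume_real_exceptionalSet_iteratedCornerMass_le hAc hnr hb K
      _ < ε := hbε

theorem exists_le_forall_largeAverageAt {A c r ε : ℝ} {f : ℝ × ℝ → ℝ} (hAc : A < c) (hc : 0 ≤ c)
    (hr : 0 < r) (hfm : Measurable f) (hf₀ : 0 ≤ f) (hf : Integrable f)
    (hε : volume.real (exceptionalSet A r f) < ε) :
    ∃ F : ℝ × ℝ → ℝ, Measurable F ∧ f ≤ F ∧ Integrable F ∧ ∫ z, F z ≤ (∫ z, f z) + c * ε ∧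
      ∀ z ∈ unitSquare, LargeAverageAt A r F z := by
  obtain ⟨V, hsub, hV, hVε⟩ := Set.exists_isOpen_lt_of_lt _ (ENNReal.ofReal ε)
    ((ENNReal.lt_ofReal_iff_toReal_lt (volume_exceptionalSet_ne_top A r f)).2 hε)
  have hVreal : volume.real V ≤ ε := ENNReal.toReal_le_of_le_ofReal
    (measureReal_nonneg.trans hε.le) hVε.le
  set g : ℝ × ℝ → ℝ := V.indicator fun _ => c
  have hg : Integrable g := (integrable_indicator_iff hV.measurableSet).2
    (integrableOn_const (hVε.trans ENNReal.ofReal_lt_top).ne)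
  have hfF : f ≤ f + g := le_add_of_nonneg_right (indicator_nonneg fun _ _ => hc)
  refine ⟨f + g, hfm.add (measurable_const.indicator hV.measurableSet), hfF, hf.add hg, ?_,
    fun z hz => ?_⟩
  · calc ∫ z, (f + g) z = (∫ z, f z) + c * volume.real V := by
          rw [integral_add' hf hg, integral_indicator hV.measurableSet, setIntegral_const,
            smul_eq_mul, mul_comm]
      _ ≤ (∫ z, f z) + c * ε := by gcongr
  · by_cases hzf : LargeAverageAt A r f z
    · exact hzf.mono le_rfl hf (hf.add hg) hfF
    · refine largeAverageAt_of_isOpen hAc hr (hf.add hg) hV (fun x hx => ?_) (hsub ⟨hz, hzf⟩) hz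
      have hgx : g x = c := indicator_of_mem hx _
      exact hgx.ge.trans (le_add_of_nonneg_left (hf₀ x))

theorem stmt7_general (A : ℝ) {δ r : ℝ} (hδ : 0 < δ) (hr : 0 < r) :
    ∃ f : ℝ × ℝ → ℝ, Measurable f ∧ (∀ x, 0 ≤ f x) ∧
      IntegrableOn f (Ioo (0 : ℝ) 1 ×ˢ Ioo (0 : ℝ) 1) ∧
      (∫ x in Ioo (0 : ℝ) 1 ×ˢ Ioo (0 : ℝ) 1, f x) ≤ δ ∧
      ∀ x ∈ Ioo (0 : ℝ) 1 ×ˢ Ioo (0 : ℝ) 1,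
        ∃ a b c d : ℝ, x ∈ Ioo a b ×ˢ Ioo c d ∧
          Ioo a b ×ˢ Ioo c d ⊆ Ioo (0 : ℝ) 1 ×ˢ Ioo (0 : ℝ) 1 ∧
          Metric.diam (Ioo a b ×ˢ Ioo c d) < r ∧
          (∫ y in Ioo a b ×ˢ Ioo c d, f y) >
            A * (volume (Ioo a b ×ˢ Ioo c d)).toReal := by
  obtain ⟨c, hAc⟩ := exists_gt |A|
  have hc : 0 < c := (abs_nonneg A).trans_lt hAc
  obtain ⟨f, hfm, hf₀, hf, hfδ, hfε⟩ := exists_integral_le_volume_real_exceptionalSet_lt A hr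
    (half_pos hδ) (div_pos (half_pos hδ) hc)
  obtain ⟨F, hFm, hfF, hF, hFint, hlarge⟩ := exists_le_forall_largeAverageAt
    ((le_abs_self A).trans_lt hAc) hc.le hr hfm hf₀ hf hfε
  have hF₀ : 0 ≤ F := hf₀.trans hfF
  refine ⟨F, hFm, hF₀, hF.integrableOn, ?_, hlarge⟩
  calc ∫ x in unitSquare, F x ≤ ∫ x, F x := setIntegral_le_integral hF (.of_forall hF₀)
    _ ≤ (∫ x, f x) + c * (δ / 2 / c) := hFint
    _ ≤ δ / 2 + δ / 2 := by rw [mul_div_cancel₀ _ hc.ne']; gcongr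
    _ = δ := add_halves δ

/-- Lemma 2.1 of Olshen (2007): for every N ≥ 3 there is a nonnegative Borel
f_N ∈ L¹((0,1)²) with ∫ f_N ≤ 1/N such that every point of the open unit square
lies in an open axis-parallel rectangle of diameter < 1/N on which the average
of f_N exceeds N. -/
theorem stmt7 (N : ℕ) (hN : 3 ≤ N) :
    ∃ f : ℝ × ℝ → ℝ, Measurable f ∧ (∀ x, 0 ≤ f x) ∧
      IntegrableOn f (Ioo (0:ℝ) 1 ×ˢ Ioo (0:ℝ) 1) ∧
      (∫ x in Ioo (0:ℝ) 1 ×ˢ Ioo (0:ℝ) 1, f x) ≤ 1 / N ∧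
      ∀ x ∈ Ioo (0:ℝ) 1 ×ˢ Ioo (0:ℝ) 1,
        ∃ a b c d : ℝ, x ∈ Ioo a b ×ˢ Ioo c d ∧
          Ioo a b ×ˢ Ioo c d ⊆ Ioo (0:ℝ) 1 ×ˢ Ioo (0:ℝ) 1 ∧
          Metric.diam (Ioo a b ×ˢ Ioo c d) < 1 / N ∧
          (∫ y in Ioo a b ×ˢ Ioo c d, f y) >
            N * (volume (Ioo a b ×ˢ Ioo c d)).toReal := by
  have hN' : (0 : ℝ) < 1 / N := one_div_pos.2 (Nat.cast_pos.2 (by omega))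
  exact stmt7_general N hN' hN'
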